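/- The group of isometries of L₂₀, i.e. the group {g ∈ GL(3,ℤ) : gᵀ L₂₀ g = L₂₀}, has order 16 and is generated by the three matrices ρ₁ = [[0,1,0],[1,0,0],[0,0,1]], ρ₂ = [[1,0,-1],[0,-1,0],[0,0,-1]], and -Id₃. -/

import Mathlib

open Matrix

/-- The lattice `L₂₀ = [[4,0,-2],[0,4,-2],[-2,-2,12]]`. -/
def L20 : Matrix (Fin 3) (Fin 3) ℤ := !![4, 0, -2; 0, 4, -2; -2, -2, 12]

/-- `ρ₁ = [[0,1,0],[1,0,0],[0,0,1]]`, as an element of `GL(3,ℤ)` (it is an involution). -/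
def rho1 : GL (Fin 3) ℤ :=
  ⟨!![0, 1, 0; 1, 0, 0; 0, 0, 1], !![0, 1, 0; 1, 0, 0; 0, 0, 1], by decide, by decide⟩

/-- `ρ₂ = [[1,0,-1],[0,-1,0],[0,0,-1]]`, as an element of `GL(3,ℤ)` (it is an involution). -/
def rho2 : GL (Fin 3) ℤ :=
  ⟨!![1, 0, -1; 0, -1, 0; 0, 0, -1], !![1, 0, -1; 0, -1, 0; 0, 0, -1], by decide, by decide⟩

/-- The sixteen words `(-1)^a ρ₁^b (ρ₁ρ₂)^c`. -/
def isoWord (i : Fin 2 × Fin 2 × Fin 4) : GL (Fin 3) ℤ :=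
  (-1) ^ (i.1 : ℕ) * rho1 ^ (i.2.1 : ℕ) * (rho1 * rho2) ^ (i.2.2 : ℕ)

theorem isoWord_val_injective :
    ∀ i j, (isoWord i : Matrix (Fin 3) (Fin 3) ℤ) = isoWord j → i = j := by
  decide +kernel

theorem isoWord_isometry : ∀ i, (isoWord i : Matrix (Fin 3) (Fin 3) ℤ)ᵀ * L20 *
    (isoWord i : Matrix (Fin 3) (Fin 3) ℤ) = L20 := by
  decide +kernel

theorem short_four {x y z : ℤ} (h : x ^ 2 + y ^ 2 + 3 * z ^ 2 - x * z - y * z = 1) :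
    (x, y, z) ∈ [((1 : ℤ), (0 : ℤ), (0 : ℤ)), (-1, 0, 0), (0, 1, 0), (0, -1, 0)] := by
  have hz : z = 0 := by
    have h1 : -1 < z := by nlinarith [sq_nonneg (2 * x - z), sq_nonneg (2 * y - z)]
    have h2 : z < 1 := by nlinarith [sq_nonneg (2 * x - z), sq_nonneg (2 * y - z)]
    omega
  subst hz
  have h1 : -1 ≤ x := by nlinarith [sq_nonneg y]
  have h2 : x ≤ 1 := by nlinarith [sq_nonneg y]
  have h3 : -1 ≤ y := by nlinarith [sq_nonneg x]
  have h4 : y ≤ 1 := by nlinarith [sq_nonneg x]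
  interval_cases x <;> interval_cases y <;> simp_all

theorem short_twelve {x y z : ℤ} (h : x ^ 2 + y ^ 2 + 3 * z ^ 2 - x * z - y * z = 3) :
    (x, y, z) ∈ [((0 : ℤ), (0 : ℤ), (1 : ℤ)), (1, 0, 1), (0, 1, 1), (1, 1, 1),
      (0, 0, -1), (-1, 0, -1), (0, -1, -1), (-1, -1, -1)] := by
  have h1 : -2 < z := by nlinarith [sq_nonneg (2 * x - z), sq_nonneg (2 * y - z)]
  have h2 : z < 2 := by nlinarith [sq_nonneg (2 * x - z), sq_nonneg (2 * y - z)]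
  have h3 : -3 < x := by
    interval_cases z <;> nlinarith [sq_nonneg (2 * y - 1), sq_nonneg (2 * y + 1), sq_nonneg y]
  have h4 : x < 3 := by
    interval_cases z <;> nlinarith [sq_nonneg (2 * y - 1), sq_nonneg (2 * y + 1), sq_nonneg y]
  have h5 : -3 < y := by
    interval_cases z <;> nlinarith [sq_nonneg (2 * x - 1), sq_nonneg (2 * x + 1), sq_nonneg x]
  have h6 : y < 3 := by
    interval_cases z <;> nlinarith [sq_nonneg (2 * x - 1), sq_nonneg (2 * x + 1), sq_nonneg x]
  interval_cases z <;> interval_cases x <;> interval_cases y <;> simp_all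

/-- Build a matrix from its three columns. -/
def ofCols (a b c : ℤ × ℤ × ℤ) : Matrix (Fin 3) (Fin 3) ℤ :=
  !![a.1, b.1, c.1; a.2.1, b.2.1, c.2.1; a.2.2, b.2.2, c.2.2]

theorem cols_search :
    ∀ a ∈ [((1 : ℤ), (0 : ℤ), (0 : ℤ)), (-1, 0, 0), (0, 1, 0), (0, -1, 0)],
    ∀ b ∈ [((1 : ℤ), (0 : ℤ), (0 : ℤ)), (-1, 0, 0), (0, 1, 0), (0, -1, 0)],
    ∀ c ∈ [((0 : ℤ), (0 : ℤ), (1 : ℤ)), (1, 0, 1), (0, 1, 1), (1, 1, 1),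
      (0, 0, -1), (-1, 0, -1), (0, -1, -1), (-1, -1, -1)],
    (ofCols a b c)ᵀ * L20 * ofCols a b c = L20 →
      ∃ i, (isoWord i : Matrix (Fin 3) (Fin 3) ℤ) = ofCols a b c := by
  decide +kernel

theorem isometry_eq_word (M : Matrix (Fin 3) (Fin 3) ℤ) (h : Mᵀ * L20 * M = L20) :
    ∃ i, (isoWord i : Matrix (Fin 3) (Fin 3) ℤ) = M := by
  have hM : M = ofCols (M 0 0, M 1 0, M 2 0) (M 0 1, M 1 1, M 2 1) (M 0 2, M 1 2, M 2 2) := by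
    ext i j
    fin_cases i <;> fin_cases j <;> rfl
  have e0 := congrFun (congrFun h 0) 0
  have e1 := congrFun (congrFun h 1) 1
  have e2 := congrFun (congrFun h 2) 2
  simp [Matrix.mul_apply, Fin.sum_univ_three, L20] at e0 e1 e2
  have a := short_four (x := M 0 0) (y := M 1 0) (z := M 2 0) (by linarith)
  have b := short_four (x := M 0 1) (y := M 1 1) (z := M 2 1) (by linarith)
  have c := short_twelve (x := M 0 2) (y := M 1 2) (z := M 2 2) (by linarith)
  have key := cols_search _ a _ b _ c
  rw [← hM] at key
  exact key h

theorem isometries_eq_range :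
    {g : GL (Fin 3) ℤ |
        (↑g : Matrix (Fin 3) (Fin 3) ℤ)ᵀ * L20 * (↑g : Matrix (Fin 3) (Fin 3) ℤ) = L20} =
      Set.range isoWord := by
  ext g
  constructor
  · intro h
    obtain ⟨i, hi⟩ := isometry_eq_word _ h
    exact ⟨i, Units.ext hi⟩
  · rintro ⟨i, rfl⟩
    exact isoWord_isometry i

/-- The group of isometries of `L₂₀`, i.e. `{g ∈ GL(3,ℤ) : gᵀ L₂₀ g = L₂₀}`, has
order `16` and is generated by `ρ₁`, `ρ₂` and `-Id`. -/
theorem stmt_3 :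
    Set.ncard {g : GL (Fin 3) ℤ |
        (↑g : Matrix (Fin 3) (Fin 3) ℤ)ᵀ * L20 * (↑g : Matrix (Fin 3) (Fin 3) ℤ) = L20} = 16 ∧
    {g : GL (Fin 3) ℤ |
        (↑g : Matrix (Fin 3) (Fin 3) ℤ)ᵀ * L20 * (↑g : Matrix (Fin 3) (Fin 3) ℤ) = L20} =
      ↑(Subgroup.closure {rho1, rho2, -1}) := by
  refine ⟨?_, ?_⟩
  · rw [isometries_eq_range, ← Set.image_univ, Set.ncard_image_of_injective _
      (fun i j h => isoWord_val_injective i j (congrArg Units.val h)), Set.ncard_univ]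
    simp
  · apply Set.Subset.antisymm
    · rw [isometries_eq_range]
      rintro _ ⟨i, rfl⟩
      have m1 : rho1 ∈ Subgroup.closure {rho1, rho2, -1} := Subgroup.subset_closure (by simp)
      have m2 : rho2 ∈ Subgroup.closure {rho1, rho2, -1} := Subgroup.subset_closure (by simp)
      have m3 : -1 ∈ Subgroup.closure {rho1, rho2, -1} := Subgroup.subset_closure (by simp)
      exact mul_mem (mul_mem (pow_mem m3 _) (pow_mem m1 _)) (pow_mem (mul_mem m1 m2) _)
    · intro g hg
      induction hg using Subgroup.closure_induction with
      | mem x hx =>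
        rcases hx with rfl | rfl | rfl
        · show _ = _
          decide +kernel
        · show _ = _
          decide +kernel
        · simp
      | one => simp
      | mul x y _ _ hx hy =>
        simp only [Set.mem_setOf_eq] at hx hy ⊢
        calc _ = (y : Matrix (Fin 3) (Fin 3) ℤ)ᵀ * ((x : Matrix (Fin 3) (Fin 3) ℤ)ᵀ * L20 * x) * y := by
              simp only [Units.val_mul, Matrix.transpose_mul, Matrix.mul_assoc]
          _ = L20 := by rw [hx, hy]
      | inv x _ hx =>
        simp only [Set.mem_setOf_eq] at hx ⊢
        have hxx : (x : Matrix (Fin 3) (Fin 3) ℤ) * (x⁻¹ : GL (Fin 3) ℤ) = 1 := x.mul_inv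
        have hxt : ((x⁻¹ : GL (Fin 3) ℤ) : Matrix (Fin 3) (Fin 3) ℤ)ᵀ *
            (x : Matrix (Fin 3) (Fin 3) ℤ)ᵀ = 1 := by
          rw [← Matrix.transpose_mul, hxx, Matrix.transpose_one]
        generalize ((x⁻¹ : GL (Fin 3) ℤ) : Matrix (Fin 3) (Fin 3) ℤ) = y at *
        calc yᵀ * L20 * y = yᵀ * ((x : Matrix (Fin 3) (Fin 3) ℤ)ᵀ * L20 * x) * y := by rw [hx]
          _ = (yᵀ * (x : Matrix (Fin 3) (Fin 3) ℤ)ᵀ) * L20 * (x * y) := by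
              simp only [Matrix.mul_assoc]
          _ = L20 := by rw [hxt, hxx, Matrix.one_mul, Matrix.mul_one]
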